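/- Suppose u(s) is a solution of the Painlevé IV equation u'' = (u')²/(2u) + (3/2)u³ + 4su² + 2(s²+1-2Θ_∞)u - 8Θ²/u with parameters Θ = 0, Θ_∞ = 1/2, and define z = (1/4)(-u' + u² + 2su) and H = (z²/u) - (u/2 + s)(z - 1/2). If u(s) = -2s - (2i/√π)e^{-s²} + O(s^{-1}) along the ray arg s = -π/4 as |s| → ∞, then H(s) = O(s^{-1}) along the same ray. -/

import Mathlib

open Complex Filter Asymptotics

/-- The direction `e^{-iπ/4}` of the ray `arg s = -π/4`. -/
noncomputable def rayDir : ℂ := Complex.exp (-(Real.pi : ℂ) * I / 4)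

/-!
Write `w = u + 2 * s` and `y = z - 1 / 2`. Along the ray `exp (s ^ 2)` has modulus `1`, `w = O(1)`,
and the pair `(u, z)` solves a Hamiltonian system with `H' = -y`, `w' = u * w - 4 * y` and
`z ^ 2 = u * H + u * w / 2 * y`.

* The derivative of `4 * H - (w + c * exp (-s ^ 2))` is `2 * s * (w + c * exp (-s ^ 2)) - w ^ 2`,
  which is `O(1)`. Hence `H = O(s)` and `z = O(s)`.
* The function `exp (s ^ 2) * w + c` is `O(s⁻¹)` and its derivative is
  `exp (s ^ 2) * (w ^ 2 - 4 * y)`, whose own derivative is controlled by `s * (1 + |y|)`.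
  Interpolation on intervals of length of order `s⁻¹` gives `y = O(1)`.
* The equation `(u * y)' = (2 * s + 2 / s) * u * y + O(1)` has only one direction of solutions that
  are not `O(1)`, the multiples of `s ^ 2 * exp (s ^ 2)`, and `u * y = O(s)` excludes it. Hence
  `u * y = O(1)`, `y = O(s⁻¹)` and `H = z ^ 2 / u - w * y / 2 = O(s⁻¹)`.

Differentiability of `u` is automatic. At a point where it fails, `deriv u = 0`, so the equation
determines the value of `u` among the numbers close to `-2 * s` from `deriv (deriv u)`; the
holomorphic primitive of `deriv u` extending `u` from the punctured neighbourhood has the same value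
there, so `u` is differentiable after all.
-/

open Topology Metric Set

/-! ### Integration and interpolation on a half-line -/

section HalfLine

variable {E : Type*} [NormedAddCommGroup E] [NormedSpace ℝ E]

lemma norm_sub_le_sub_of_norm_hasDerivAt_le {f f' : ℝ → E} {B B' : ℝ → ℝ} {a b : ℝ} (hab : a ≤ b)
    (hf : ∀ t ∈ Icc a b, HasDerivAt f (f' t) t) (hB : ∀ t ∈ Icc a b, HasDerivAt B (B' t) t)
    (hle : ∀ t ∈ Icc a b, ‖f' t‖ ≤ B' t) : ‖f b - f a‖ ≤ B b - B a :=
  image_norm_le_of_norm_deriv_right_le_deriv_boundary'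
    (f := fun t => f t - f a) (B := fun t => B t - B a)
    (fun t ht => ((hf t ht).sub_const _).continuousAt.continuousWithinAt)
    (fun t ht => ((hf t (Ico_subset_Icc_self ht)).sub_const _).hasDerivWithinAt)
    (by simp)
    (fun t ht => ((hB t ht).sub_const _).continuousAt.continuousWithinAt)
    (fun t ht => ((hB t (Ico_subset_Icc_self ht)).sub_const _).hasDerivWithinAt)
    (fun t ht => hle t (Ico_subset_Icc_self ht)) (right_mem_Icc.2 hab)

lemma isBigO_of_hasDerivAt_of_tendsto_atTop {f f' : ℝ → E} {B B' : ℝ → ℝ}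
    (hf : ∀ᶠ t in atTop, HasDerivAt f (f' t) t) (hB : ∀ᶠ t in atTop, HasDerivAt B (B' t) t)
    (hB' : ∀ᶠ t in atTop, 0 ≤ B' t) (h : f' =O[atTop] B') (hB_top : Tendsto B atTop atTop) :
    f =O[atTop] B := by
  obtain ⟨C, -, hC⟩ := h.exists_pos
  obtain ⟨R, hR⟩ := eventually_atTop.1 (hf.and (hB.and (hB'.and hC.bound)))
  have hB_norm : Tendsto (norm ∘ B) atTop atTop := tendsto_norm_atTop_atTop.comp hB_top
  have hfR : (fun _ => f R) =O[atTop] B := (isLittleO_const_left.2 (.inr hB_norm)).isBigO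
  have hBR : (fun _ => B R) =O[atTop] B := (isLittleO_const_left.2 (.inr hB_norm)).isBigO
  have hsub : (fun t => f t - f R) =O[atTop] fun t => B t - B R := by
    refine IsBigO.of_bound C ?_
    filter_upwards [eventually_ge_atTop R, hB_top.eventually_ge_atTop (B R)] with r hr hBr
    rw [Real.norm_of_nonneg (sub_nonneg.2 hBr), mul_sub]
    refine norm_sub_le_sub_of_norm_hasDerivAt_le hr (fun t ht => (hR t ht.1).1)
      (fun t ht => (hR t ht.1).2.1.const_mul C) fun t ht => ?_
    obtain ⟨-, -, h0, hle⟩ := hR t ht.1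
    rwa [Real.norm_of_nonneg h0] at hle
  simpa using (hsub.trans ((isBigO_refl B _).sub hBR)).add hfR

lemma isBigO_of_hasDerivAt_of_tendsto_zero {f f' : ℝ → E} {B B' : ℝ → ℝ}
    (hf : ∀ᶠ t in atTop, HasDerivAt f (f' t) t) (hB : ∀ᶠ t in atTop, HasDerivAt B (B' t) t)
    (hB' : ∀ᶠ t in atTop, B' t ≤ 0) (h : f' =O[atTop] B') (hf0 : Tendsto f atTop (𝓝 0))
    (hB0 : Tendsto B atTop (𝓝 0)) : f =O[atTop] B := by
  obtain ⟨C, hC0, hC⟩ := h.exists_pos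
  obtain ⟨R, hR⟩ := eventually_atTop.1 (hf.and (hB.and (hB'.and hC.bound)))
  refine IsBigO.of_bound C ?_
  filter_upwards [eventually_ge_atTop R] with r hr
  have hsub : ∀ᶠ T in atTop, ‖f T - f r‖ ≤ -C * B T - -C * B r := by
    filter_upwards [eventually_ge_atTop r] with T hT
    refine norm_sub_le_sub_of_norm_hasDerivAt_le hT (fun t ht => (hR t (hr.trans ht.1)).1)
      (fun t ht => (hR t (hr.trans ht.1)).2.1.const_mul (-C)) fun t ht => ?_
    obtain ⟨-, -, h0, hle⟩ := hR t (hr.trans ht.1)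
    rwa [Real.norm_of_nonpos h0, mul_neg, ← neg_mul] at hle
  have hlim := le_of_tendsto_of_tendsto (hf0.sub_const (f r)).norm
    ((hB0.const_mul (-C)).sub_const (-C * B r)) hsub
  calc ‖f r‖ ≤ C * B r := by simpa using hlim
    _ ≤ C * ‖B r‖ := by gcongr; exact Real.le_norm_self _

/-- Landau's interpolation inequality. -/
lemma norm_hasDerivAt_le_of_norm_le {f g g' : ℝ → E} {r h A B : ℝ} (hh : 0 < h)
    (hf : ∀ t ∈ Icc r (r + h), HasDerivAt f (g t) t)
    (hg : ∀ t ∈ Icc r (r + h), HasDerivAt g (g' t) t)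
    (hfr : ‖f r‖ ≤ A) (hfh : ‖f (r + h)‖ ≤ A) (hB : ∀ t ∈ Icc r (r + h), ‖g' t‖ ≤ B) :
    ‖g r‖ ≤ 2 * A / h + B * h := by
  have hl : r ∈ Icc r (r + h) := left_mem_Icc.2 (by linarith)
  have hr : r + h ∈ Icc r (r + h) := right_mem_Icc.2 (by linarith)
  have hB0 : 0 ≤ B := (norm_nonneg _).trans (hB r hl)
  have hg_sub : ∀ t ∈ Icc r (r + h), ‖g t - g r‖ ≤ B * h := by
    intro t ht
    refine ((convex_Icc r (r + h)).norm_image_sub_le_of_norm_hasDerivWithin_le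
      (fun t ht => (hg t ht).hasDerivWithinAt) hB hl ht).trans ?_
    rw [Real.norm_of_nonneg (by linarith [ht.1])]
    gcongr
    linarith [ht.2]
  have htaylor : ‖f (r + h) - f r - h • g r‖ ≤ B * h * h := by
    have := (convex_Icc r (r + h)).norm_image_sub_le_of_norm_hasDerivWithin_le
      (f := fun t => f t - (t - r) • g r) (f' := fun t => g t - g r)
      (fun t ht => ((hf t ht).sub (((hasDerivAt_id t).sub_const r).smul_const (g r))
        |>.congr_deriv (by simp)).hasDerivWithinAt) hg_sub hl hr
    simpa [abs_of_pos hh, sub_right_comm] using this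
  have hnorm : h * ‖g r‖ ≤ 2 * A + B * h * h := by
    calc h * ‖g r‖ = ‖f (r + h) - f r - (f (r + h) - f r - h • g r)‖ := by
          rw [sub_sub_cancel, norm_smul, Real.norm_of_nonneg hh.le]
      _ ≤ ‖f (r + h)‖ + ‖f r‖ + ‖f (r + h) - f r - h • g r‖ :=
        (norm_sub_le _ _).trans (add_le_add_left (norm_sub_le _ _) _)
      _ ≤ 2 * A + B * h * h := by linarith
  calc ‖g r‖ ≤ (2 * A + B * h * h) / h := (le_div_iff₀' hh).2 hnorm
    _ = 2 * A / h + B * h := by field_simp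

lemma norm_hasDerivAt_le_of_norm_deriv_le {f g g' : ℝ → E} {r A L : ℝ} (hL : 0 < L)
    (hf : ∀ t ∈ Icc r (r + 1 / (4 * L)), HasDerivAt f (g t) t)
    (hg : ∀ t ∈ Icc r (r + 1 / (4 * L)), HasDerivAt g (g' t) t)
    (hA : ∀ t ∈ Icc r (r + 1 / (4 * L)), ‖f t‖ ≤ A)
    (hg' : ∀ t ∈ Icc r (r + 1 / (4 * L)), ‖g' t‖ ≤ L * (1 + ‖g t‖)) :
    ‖g r‖ ≤ 16 * A * L + 1 := by
  have hh : 0 < 1 / (4 * L) := by positivity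
  have hgronwall : ∀ t ∈ Icc r (r + 1 / (4 * L)), 1 + ‖g t‖ ≤ 2 * (1 + ‖g r‖) := by
    intro t ht
    have hexp : Real.exp (L * (t - r)) ≤ 2 := by
      have hle : L * (t - r) ≤ 1 / 4 := by
        calc L * (t - r) ≤ L * (1 / (4 * L)) := by gcongr; linarith [ht.2]
          _ = 1 / 4 := by field_simp
      have := Real.exp_bound_div_one_sub_of_interval (x := L * (t - r))
        (mul_nonneg hL.le (by linarith [ht.1])) (by linarith)
      refine this.trans ((div_le_iff₀ (by linarith)).2 (by linarith))
    have hbound := norm_le_gronwallBound_of_norm_deriv_right_le (f := g) (δ := ‖g r‖) (K := L)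
      (ε := L) (fun t ht => (hg t ht).continuousAt.continuousWithinAt)
      (fun t ht => (hg t (Ico_subset_Icc_self ht)).hasDerivWithinAt) le_rfl
      (fun t ht => (hg' t (Ico_subset_Icc_self ht)).trans_eq (by ring)) t ht
    rw [gronwallBound_of_K_ne_0 hL.ne', div_self hL.ne'] at hbound
    nlinarith [norm_nonneg (g r)]
  have hlandau := norm_hasDerivAt_le_of_norm_le (B := 2 * L * (1 + ‖g r‖)) hh hf hg
    (hA _ (left_mem_Icc.2 (by linarith))) (hA _ (right_mem_Icc.2 (by linarith)))
    fun t ht => (hg' t ht).trans <| by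
      calc L * (1 + ‖g t‖) ≤ L * (2 * (1 + ‖g r‖)) := by gcongr; exact hgronwall t ht
        _ = 2 * L * (1 + ‖g r‖) := by ring
  have hsimp : 2 * A / (1 / (4 * L)) + 2 * L * (1 + ‖g r‖) * (1 / (4 * L))
      = 8 * A * L + (1 + ‖g r‖) / 2 := by field_simp; ring
  linarith

/- On an interval of length of order `t ^ (-k)` the function `1 + ‖g‖` grows at most by a factor
`2`, by Grönwall's inequality, so Landau's inequality bounds `g` by the size of `f` there. -/
lemma isBigO_one_of_isBigO_inv_pow_of_hasDerivAt {f g g' : ℝ → E} {k : ℕ}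
    (hf : ∀ᶠ t in atTop, HasDerivAt f (g t) t) (hg : ∀ᶠ t in atTop, HasDerivAt g (g' t) t)
    (hf_le : f =O[atTop] fun t => (t ^ k)⁻¹)
    (hg'_le : g' =O[atTop] fun t => t ^ k * (1 + ‖g t‖)) : g =O[atTop] (1 : ℝ → ℝ) := by
  obtain ⟨A, hA0, hA⟩ := hf_le.exists_pos
  obtain ⟨K₀, hK₀⟩ := hg'_le.isBigOWith
  set K := max K₀ 1
  have hK1 : 1 ≤ K := le_max_right _ _
  have hK : ∀ᶠ t in atTop, ‖g' t‖ ≤ K * t ^ k * (1 + ‖g t‖) := by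
    filter_upwards [(hK₀.weaken (le_max_left _ 1)).bound, eventually_ge_atTop 0] with t ht ht0
    rwa [Real.norm_of_nonneg (by positivity), ← mul_assoc] at ht
  obtain ⟨R, hR⟩ := eventually_atTop.1 (hf.and (hg.and (hA.bound.and hK)))
  refine IsBigO.of_bound (16 * A * K * 2 ^ k + 1) ?_
  filter_upwards [eventually_ge_atTop R, eventually_ge_atTop 1] with r hr hr1
  have hL1 : 1 ≤ K * (2 * r) ^ k := one_le_mul_of_one_le_of_one_le hK1 (one_le_pow₀ (by linarith))
  have hstep : 1 / (4 * (K * (2 * r) ^ k)) ≤ 1 :=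
    (div_le_one (by linarith)).2 (by linarith)
  have hbound := norm_hasDerivAt_le_of_norm_deriv_le (r := r) (A := A * (r ^ k)⁻¹)
    (L := K * (2 * r) ^ k) (by linarith)
    (fun t ht => (hR t (hr.trans ht.1)).1) (fun t ht => (hR t (hr.trans ht.1)).2.1)
    (fun t ht => (hR t (hr.trans ht.1)).2.2.1.trans <| by
      have ht0 : 0 ≤ t := by linarith [ht.1]
      rw [Real.norm_of_nonneg (by positivity)]
      gcongr
      exact ht.1)
    (fun t ht => (hR t (hr.trans ht.1)).2.2.2.trans <| by
      have ht0 : 0 ≤ t := by linarith [ht.1]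
      have ht2 : t ≤ 2 * r := by linarith [ht.2]
      gcongr)
  calc ‖g r‖ ≤ 16 * (A * (r ^ k)⁻¹) * (K * (2 * r) ^ k) + 1 := hbound
    _ = (16 * A * K * 2 ^ k + 1) * ‖(1 : ℝ → ℝ) r‖ := by
      rw [mul_pow, Pi.one_apply, norm_one]
      field_simp

end HalfLine

lemma isBigO_of_sq_eq_add_mul {α 𝕜 : Type*} [NormedField 𝕜] {l : Filter α} {q a b φ : α → 𝕜}
    (h : ∀ᶠ x in l, q x ^ 2 = a x + b x * q x) (ha : a =O[l] fun x => φ x ^ 2)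
    (hb : b =O[l] φ) : q =O[l] φ := by
  obtain ⟨A, hA0, hA⟩ := ha.exists_pos
  obtain ⟨B, hB0, hB⟩ := hb.exists_pos
  refine IsBigO.of_bound (A + B + 1) ?_
  filter_upwards [h, hA.bound, hB.bound] with x hx hax hbx
  rcases le_total ‖q x‖ ‖φ x‖ with hle | hle
  · nlinarith [norm_nonneg (φ x)]
  · have hsq : ‖q x‖ ^ 2 ≤ (A + B) * ‖φ x‖ * ‖q x‖ := by
      calc ‖q x‖ ^ 2 = ‖a x + b x * q x‖ := by rw [← norm_pow, hx]
        _ ≤ ‖a x‖ + ‖b x‖ * ‖q x‖ := by rw [← norm_mul]; exact norm_add_le _ _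
        _ ≤ A * ‖φ x ^ 2‖ + B * ‖φ x‖ * ‖q x‖ := by gcongr
        _ = A * (‖φ x‖ * ‖φ x‖) + B * ‖φ x‖ * ‖q x‖ := by rw [norm_pow, sq]
        _ ≤ A * (‖φ x‖ * ‖q x‖) + B * ‖φ x‖ * ‖q x‖ := by gcongr
        _ = (A + B) * ‖φ x‖ * ‖q x‖ := by ring
    rcases (norm_nonneg (q x)).eq_or_lt with h0 | hpos
    · rw [← h0]; positivity
    · have := le_of_mul_le_mul_right (by linarith [sq ‖q x‖] :
        ‖q x‖ * ‖q x‖ ≤ (A + B) * ‖φ x‖ * ‖q x‖) hpos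
      linarith [norm_nonneg (φ x)]

lemma isPreconnected_ball_diff_center {E : Type*} [NormedAddCommGroup E] [NormedSpace ℝ E]
    (hE : 1 < Module.rank ℝ E) (c : E) {r : ℝ} (hr : 0 < r) : IsPreconnected (ball c r \ {c}) := by
  have himage : OpenPartialHomeomorph.univBall c r '' {0}ᶜ = ball c r \ {c} := by
    have hinj : Function.Injective (OpenPartialHomeomorph.univBall c r) := by
      simpa [Set.injOn_univ] using (OpenPartialHomeomorph.univBall c r).injOn
    have himage_univ := (OpenPartialHomeomorph.univBall c r).image_source_eq_target
    rw [OpenPartialHomeomorph.univBall_source, OpenPartialHomeomorph.univBall_target c hr]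
      at himage_univ
    rw [compl_eq_univ_sdiff, image_sdiff hinj, himage_univ, image_singleton,
      OpenPartialHomeomorph.univBall_apply_zero]
  rw [← himage]
  exact (isConnected_compl_singleton_of_one_lt_rank hE 0).isPreconnected.image _
    (OpenPartialHomeomorph.continuous_univBall c r).continuousOn

lemma exists_analyticAt_deriv_eventuallyEq {E : Type*} [NormedAddCommGroup E] [NormedSpace ℂ E]
    [CompleteSpace E] {f : ℂ → E} {s : ℂ} (hf : ∀ᶠ t in 𝓝[≠] s, DifferentiableAt ℂ f t)
    (hf' : DifferentiableAt ℂ (deriv f) s) :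
    ∃ g, AnalyticAt ℂ g s ∧ deriv f =ᶠ[𝓝 s] deriv g ∧ f =ᶠ[𝓝[≠] s] g := by
  obtain ⟨ρ, hρ, hball⟩ := Metric.eventually_nhds_iff_ball.1 (eventually_nhdsWithin_iff.1 hf)
  have hopen : IsOpen (ball s ρ \ {s}) := isOpen_ball.sdiff isClosed_singleton
  have hdiff : DifferentiableOn ℂ f (ball s ρ \ {s}) := fun t ht =>
    (hball t ht.1 ht.2).differentiableWithinAt
  have hderiv : DifferentiableOn ℂ (deriv f) (ball s ρ) := by
    intro t ht
    rcases eq_or_ne t s with rfl | hts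
    · exact hf'.differentiableWithinAt
    · exact ((hdiff.deriv hopen).differentiableAt
        (hopen.mem_nhds ⟨ht, hts⟩)).differentiableWithinAt
  obtain ⟨g, hg⟩ := hderiv.isExactOn_ball
  have hsub : ∀ t ∈ ball s ρ \ {s}, HasDerivAt (fun t => f t - g t) 0 t := fun t ht =>
    ((hball t ht.1 ht.2).hasDerivAt.sub (hg t ht.1)).congr_deriv (sub_self _)
  obtain ⟨a, ha⟩ := hopen.exists_is_const_of_deriv_eq_zero
    (isPreconnected_ball_diff_center (by simp [Complex.rank_real_complex]) s hρ)
    (fun t ht => (hsub t ht).differentiableAt.differentiableWithinAt)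
    (fun t ht => (hsub t ht).deriv)
  have hg_near : ∀ᶠ t in 𝓝 s, HasDerivAt (fun t => g t + a) (deriv f t) t := by
    filter_upwards [ball_mem_nhds s hρ] with t ht using (hg t ht).add_const a
  refine ⟨fun t => g t + a, analyticAt_iff_eventually_differentiableAt.2
    (hg_near.mono fun t ht => ht.differentiableAt), hg_near.mono fun t ht => ht.deriv.symm, ?_⟩
  filter_upwards [nhdsWithin_le_nhds (ball_mem_nhds s hρ), self_mem_nhdsWithin] with t ht hts
  rw [← ha t ⟨ht, hts⟩, add_sub_cancel]

lemma exists_analyticAt_of_deriv_deriv_ne_zero {E : Type*} [NormedAddCommGroup E] [NormedSpace ℂ E]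
    [CompleteSpace E] {f : ℂ → E} {s : ℂ} (h : deriv (deriv f) s ≠ 0) :
    ∃ g, AnalyticAt ℂ g s ∧ deriv f =ᶠ[𝓝 s] deriv g ∧ f =ᶠ[𝓝[≠] s] g := by
  have hf' : DifferentiableAt ℂ (deriv f) s := differentiableAt_of_deriv_ne_zero h
  exact exists_analyticAt_deriv_eventuallyEq ((hf'.hasDerivAt.eventually_ne (c := 0) h).mono
    fun t ht => differentiableAt_of_deriv_ne_zero ht) hf'

/-! ### Asymptotics along a ray -/

/-- The filter of points `r * ω` of the ray in direction `ω`, as the real number `r` tends to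
`+∞`. -/
noncomputable def rayAtTop (ω : ℂ) : Filter ℂ := map (fun r : ℝ => (r : ℂ) * ω) atTop

section Ray

variable {E : Type*} [NormedAddCommGroup E] [NormedSpace ℂ E] {ω : ℂ}

lemma eventually_rayAtTop {p : ℂ → Prop} :
    (∀ᶠ s in rayAtTop ω, p s) ↔ ∀ᶠ r : ℝ in atTop, p (r * ω) := Iff.rfl

lemma isBigO_rayAtTop {F G : Type*} [Norm F] [Norm G] {f : ℂ → F} {g : ℂ → G} :
    f =O[rayAtTop ω] g ↔ (fun r : ℝ => f (r * ω)) =O[atTop] fun r : ℝ => g (r * ω) :=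
  isBigO_map

lemma rayAtTop_le_cobounded (hω : ω ≠ 0) : rayAtTop ω ≤ Bornology.cobounded ℂ := by
  refine (tendsto_norm_atTop_iff_cobounded.1 ?_ :
    Tendsto (fun r : ℝ => (r : ℂ) * ω) atTop (Bornology.cobounded ℂ))
  simpa using tendsto_abs_atTop_atTop.atTop_mul_const (norm_pos_iff.2 hω)

lemma tendsto_zpow_neg_one_rayAtTop (hω : ω ≠ 0) :
    Tendsto (fun s : ℂ => s ^ (-1 : ℤ)) (rayAtTop ω) (𝓝 0) := by
  simpa using tendsto_inv₀_cobounded.mono_left (rayAtTop_le_cobounded hω)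

lemma isTheta_ofReal_mul_zpow (hω : ω ≠ 0) (n : ℤ) (l : Filter ℝ) :
    (fun r : ℝ => ((r : ℂ) * ω) ^ n) =Θ[l] fun r : ℝ => r ^ n := by
  simp only [mul_zpow, mul_comm _ (ω ^ n)]
  exact (isTheta_const_mul_left (zpow_ne_zero n hω)).2
    (.of_norm_eventuallyEq_norm (.of_forall fun r => by simp))

lemma isBigO_rayAtTop_zpow {F : Type*} [Norm F] (hω : ω ≠ 0) {f : ℂ → F} {n : ℤ} :
    (f =O[rayAtTop ω] fun s => s ^ n) ↔ (fun r : ℝ => f (r * ω)) =O[atTop] fun r : ℝ => r ^ n :=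
  isBigO_rayAtTop.trans (isTheta_ofReal_mul_zpow hω n atTop).isBigO_congr_right

lemma isBigO_zpow_of_le {𝕜 : Type*} [NormedField 𝕜] {l : Filter 𝕜}
    (hl : l ≤ Bornology.cobounded 𝕜) {m n : ℤ} (hmn : m ≤ n) :
    (fun s : 𝕜 => s ^ m) =O[l] fun s => s ^ n := by
  refine IsBigO.of_bound 1 ?_
  filter_upwards [hl (tendsto_norm_cobounded_atTop.eventually_ge_atTop 1)] with s hs
  simpa using zpow_le_zpow_right₀ hs hmn

lemma isBigO_mul_zpow {𝕜 : Type*} [NormedField 𝕜] {l : Filter 𝕜}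
    (hl : l ≤ Bornology.cobounded 𝕜) {f g : 𝕜 → 𝕜} {m n k : ℤ}
    (hf : f =O[l] fun s => s ^ m) (hg : g =O[l] fun s => s ^ n) (hmn : m + n ≤ k) :
    (fun s => f s * g s) =O[l] fun s => s ^ k := by
  refine ((hf.mul hg).congr' .rfl ?_).trans (isBigO_zpow_of_le hl hmn)
  filter_upwards [hl (Bornology.eventually_ne_cobounded 0)] with s hs
  rw [zpow_add₀ hs]

lemma hasDerivAt_comp_ray {f : ℂ → E} {f' : E} {r : ℝ} (h : HasDerivAt f f' (r * ω)) :
    HasDerivAt (fun r : ℝ => f (r * ω)) (ω • f') r := by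
  have hray : HasDerivAt (fun r : ℝ => (r : ℂ) * ω) ω r := by
    simpa using ofRealCLM.hasDerivAt.mul_const ω
  exact h.scomp r hray

lemma isBigO_rayAtTop_zpow_of_hasDerivAt_of_pos (hω : ω ≠ 0) {f f' : ℂ → E} {n : ℤ} (hn : 0 < n)
    (hf : ∀ᶠ s in rayAtTop ω, HasDerivAt f (f' s) s)
    (h : f' =O[rayAtTop ω] fun s => s ^ (n - 1)) : f =O[rayAtTop ω] fun s => s ^ n := by
  have hn' : (0 : ℝ) < n := by exact_mod_cast hn
  refine (isBigO_rayAtTop_zpow hω).2 (isBigO_of_hasDerivAt_of_tendsto_atTop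
    (B' := fun r => n * r ^ (n - 1)) ((eventually_rayAtTop.1 hf).mono fun r => hasDerivAt_comp_ray)
    ?_ ?_ ?_ (tendsto_zpow_atTop_atTop hn))
  · filter_upwards [eventually_ne_atTop 0] with r hr using hasDerivAt_zpow n r (.inl hr)
  · filter_upwards [eventually_ge_atTop 0] with r hr
    positivity
  · exact (((isBigO_rayAtTop_zpow hω).1 h).const_smul_left ω).trans
      (isBigO_self_const_mul hn'.ne' _ _)

lemma isBigO_rayAtTop_zpow_of_hasDerivAt_of_neg (hω : ω ≠ 0) {f f' : ℂ → E} {n : ℤ} (hn : n < 0)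
    (hf : ∀ᶠ s in rayAtTop ω, HasDerivAt f (f' s) s)
    (h : f' =O[rayAtTop ω] fun s => s ^ (n - 1)) (hf0 : Tendsto f (rayAtTop ω) (𝓝 0)) :
    f =O[rayAtTop ω] fun s => s ^ n := by
  have hn' : (n : ℝ) < 0 := by exact_mod_cast hn
  refine (isBigO_rayAtTop_zpow hω).2 (isBigO_of_hasDerivAt_of_tendsto_zero
    (B' := fun r => n * r ^ (n - 1)) ((eventually_rayAtTop.1 hf).mono fun r => hasDerivAt_comp_ray)
    ?_ ?_ ?_ (tendsto_map'_iff.1 hf0) (tendsto_zpow_atTop_zero hn))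
  · filter_upwards [eventually_ne_atTop 0] with r hr using hasDerivAt_zpow n r (.inl hr)
  · filter_upwards [eventually_ge_atTop 0] with r hr
    exact mul_nonpos_of_nonpos_of_nonneg hn'.le (by positivity)
  · exact (((isBigO_rayAtTop_zpow hω).1 h).const_smul_left ω).trans
      (isBigO_self_const_mul hn'.ne _ _)

lemma isBigO_rayAtTop_one_of_isBigO_inv_pow_of_hasDerivAt (hω : ω ≠ 0) {f g g' : ℂ → E} {k : ℕ}
    (hf : ∀ᶠ s in rayAtTop ω, HasDerivAt f (g s) s)
    (hg : ∀ᶠ s in rayAtTop ω, HasDerivAt g (g' s) s)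
    (hf_le : f =O[rayAtTop ω] fun s => (s ^ k)⁻¹)
    (hg'_le : g' =O[rayAtTop ω] fun s => ‖s‖ ^ k * (1 + ‖g s‖)) :
    g =O[rayAtTop ω] fun _ => (1 : ℂ) := by
  have hpow : (fun r : ℝ => ‖(r : ℂ) * ω‖ ^ k) =O[atTop] fun r : ℝ => r ^ k := by
    simpa [mul_pow] using ((isTheta_ofReal_mul_zpow hω k atTop).isBigO).norm_left
  have hgω : (fun r : ℝ => 1 + ‖g (r * ω)‖) =O[atTop] fun r : ℝ => 1 + ‖ω • g (r * ω)‖ := by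
    refine IsBigO.of_bound (1 + ‖ω‖⁻¹) (.of_forall fun r => ?_)
    rw [Real.norm_of_nonneg (by positivity), Real.norm_of_nonneg (by positivity), norm_smul]
    have : ‖ω‖⁻¹ * ‖ω‖ = 1 := inv_mul_cancel₀ (norm_ne_zero_iff.2 hω)
    nlinarith [norm_nonneg (g (r * ω)), norm_nonneg ω, inv_nonneg.2 (norm_nonneg ω),
      mul_nonneg (norm_nonneg ω) (norm_nonneg (g (r * ω)))]
  have hreal := isBigO_one_of_isBigO_inv_pow_of_hasDerivAt (k := k)
    ((eventually_rayAtTop.1 hf).mono fun r => hasDerivAt_comp_ray)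
    ((eventually_rayAtTop.1 hg).mono fun r hr => (hasDerivAt_comp_ray hr).const_smul ω)
    (by simpa [zpow_neg] using (isBigO_rayAtTop_zpow hω (n := -k)).1 (by simpa using hf_le))
    ((((isBigO_rayAtTop.1 hg'_le).trans (hpow.mul hgω)).const_smul_left ω).const_smul_left ω)
  refine isBigO_rayAtTop.2 (((hreal.const_smul_left ω⁻¹).congr_left fun r => ?_).trans ?_)
  · simp [hω]
  · exact isBigO_const_const _ one_ne_zero _

lemma eventually_frequently_nhdsNE_rayAtTop (hω : ω ≠ 0) {p : ℂ → Prop}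
    (hp : ∀ᶠ s in rayAtTop ω, p s) : ∀ᶠ s in rayAtTop ω, ∃ᶠ t in 𝓝[≠] s, p t := by
  obtain ⟨R, hR⟩ := eventually_atTop.1 (eventually_rayAtTop.1 hp)
  refine eventually_rayAtTop.2 ((eventually_ge_atTop R).mono fun r hr => ?_)
  have hray : Tendsto (fun t : ℝ => (t : ℂ) * ω) (𝓝[>] r) (𝓝[≠] ((r : ℂ) * ω)) := by
    refine (Continuous.continuousWithinAt (by fun_prop)).tendsto_nhdsWithin fun t ht heq => ?_
    exact (ne_of_gt (mem_Ioi.1 ht)) (by exact_mod_cast mul_right_cancel₀ hω heq)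
  refine hray.frequently (Eventually.frequently ?_)
  filter_upwards [self_mem_nhdsWithin] with t ht using hR t (hr.trans (mem_Ioi.1 ht).le)

lemma exp_sq_mul_exp_neg_sq (s : ℂ) : exp (s ^ 2) * exp (-s ^ 2) = 1 := by
  rw [← exp_add, add_neg_cancel, exp_zero]

lemma isBigO_exp_sq_rayAtTop (hω : (ω ^ 2).re = 0) :
    (fun s => exp (s ^ 2)) =O[rayAtTop ω] fun s => s ^ (0 : ℤ) :=
  IsBigO.of_bound 1 (eventually_rayAtTop.2 (.of_forall fun r => by
    rw [norm_exp, mul_pow, ← ofReal_pow, re_ofReal_mul, hω]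
    simp))

lemma isBigO_exp_neg_sq_rayAtTop (hω : (ω ^ 2).re = 0) :
    (fun s => exp (-s ^ 2)) =O[rayAtTop ω] fun s => s ^ (0 : ℤ) :=
  IsBigO.of_bound 1 (eventually_rayAtTop.2 (.of_forall fun r => by
    rw [norm_exp, neg_re, mul_pow, ← ofReal_pow, re_ofReal_mul, hω]
    simp))

end Ray

/-! ### The Painlevé IV equation -/

/-- The right-hand side of the Painlevé IV equation, as a function of the point `s`, the value `u`
and the derivative `u'` of the solution. -/
noncomputable def painleveIVRhs (Θ Θinf s u u' : ℂ) : ℂ :=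
  u' ^ 2 / (2 * u) + (3 / 2 : ℂ) * u ^ 3 + 4 * s * u ^ 2 + 2 * (s ^ 2 + 1 - 2 * Θinf) * u
    - 8 * Θ ^ 2 / u

/-- `u` solves the Painlevé IV equation wherever it does not vanish. The derivatives are
`deriv`, with value `0` where `u` or `deriv u` is not differentiable. -/
def SolvesPainleveIV (Θ Θinf : ℂ) (u : ℂ → ℂ) : Prop :=
  ∀ s, u s ≠ 0 → deriv (deriv u) s = painleveIVRhs Θ Θinf s (u s) (deriv u s)

/-- The variable `z` of the Hamiltonian system attached to the Painlevé IV equation. -/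
noncomputable def painleveZ (Θ s u u' : ℂ) : ℂ := (1 / 4 : ℂ) * (-u' + u ^ 2 + 2 * s * u + 4 * Θ)

/-- The Hamiltonian `H` of the Painlevé IV equation, in the variables `u` and `z`. -/
noncomputable def painleveHamiltonian (Θ Θinf s u z : ℂ) : ℂ :=
  z / u * (z - 2 * Θ) - (u / 2 + s) * (z - Θ - Θinf)

lemma SolvesPainleveIV.hasDerivAt_painleveZ {Θ Θinf s : ℂ} {u : ℂ → ℂ}
    (hode : SolvesPainleveIV Θ Θinf u) (hu : AnalyticAt ℂ u s) (hne : u s ≠ 0) :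
    HasDerivAt (fun t => painleveZ Θ t (u t) (deriv u t))
      (-2 * painleveZ Θ s (u s) (deriv u s) * (painleveZ Θ s (u s) (deriv u s) - 2 * Θ) / u s
        - u s * (painleveZ Θ s (u s) (deriv u s) - Θ - Θinf)) s := by
  have hu' := hu.differentiableAt.hasDerivAt
  have hu'' := hu.deriv.differentiableAt.hasDerivAt
  refine ((((hu''.neg.add (hu'.pow 2)).add (((hasDerivAt_id s).const_mul 2).mul hu')).add_const
    (4 * Θ)).const_mul (1 / 4 : ℂ)).congr_deriv ?_
  rw [hode s hne]
  simp only [painleveIVRhs, painleveZ, id]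
  field_simp
  ring

lemma norm_le_norm_of_norm_add_two_mul_le {s u : ℂ} (h : 4 * ‖u + 2 * s‖ ≤ ‖s‖) : ‖s‖ ≤ ‖u‖ := by
  have : ‖2 * s‖ ≤ ‖u + 2 * s‖ + ‖u‖ := by simpa using norm_sub_le (u + 2 * s) u
  rw [norm_mul, Complex.norm_ofNat] at this
  linarith [norm_nonneg s]

lemma injOn_painleveIVRhs (s : ℂ) :
    InjOn (fun u => painleveIVRhs 0 (1 / 2) s u 0) {u | 4 * ‖u + 2 * s‖ ≤ ‖s‖} := by
  intro u₁ (h₁ : 4 * ‖u₁ + 2 * s‖ ≤ ‖s‖) u₂ (h₂ : 4 * ‖u₂ + 2 * s‖ ≤ ‖s‖) heq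
  set w₁ := u₁ + 2 * s with hw₁
  set w₂ := u₂ + 2 * s with hw₂
  by_contra hne
  have hquot : 3 / 2 * (w₁ ^ 2 + w₁ * w₂ + w₂ ^ 2) - 5 * s * (w₁ + w₂) = -(4 * s ^ 2) := by
    refine mul_left_cancel₀ (sub_ne_zero.2 hne) ?_
    simp only [painleveIVRhs] at heq
    rw [hw₁, hw₂]
    linear_combination heq
  have hnorm : 4 * ‖s‖ ^ 2
      ≤ 3 / 2 * (‖w₁‖ ^ 2 + ‖w₁‖ * ‖w₂‖ + ‖w₂‖ ^ 2) + 5 * ‖s‖ * (‖w₁‖ + ‖w₂‖) := by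
    calc 4 * ‖s‖ ^ 2 = ‖3 / 2 * (w₁ ^ 2 + w₁ * w₂ + w₂ ^ 2) - 5 * s * (w₁ + w₂)‖ := by
          rw [hquot]; simp
      _ ≤ ‖3 / 2 * (w₁ ^ 2 + w₁ * w₂ + w₂ ^ 2)‖ + ‖5 * s * (w₁ + w₂)‖ := norm_sub_le _ _
      _ ≤ _ := by
        simp only [norm_mul, norm_div, Complex.norm_ofNat]
        gcongr
        · exact norm_add₃_le.trans_eq (by simp)
        · exact norm_add_le _ _
  have hs0 : ‖s‖ = 0 := by
    nlinarith [norm_nonneg w₁, norm_nonneg w₂, norm_nonneg s,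
      mul_le_mul h₁ h₂ (by positivity) (norm_nonneg s)]
  have hzero {w : ℂ} (h : 4 * ‖w‖ ≤ ‖s‖) : w = 0 :=
    norm_le_zero_iff.1 (by linarith)
  exact hne (add_right_cancel ((hzero h₁).trans (hzero h₂).symm))

lemma SolvesPainleveIV.deriv_deriv_eq_of_eventuallyEq_nhdsNE {Θ Θinf s : ℂ} {u v : ℂ → ℂ}
    (hode : SolvesPainleveIV Θ Θinf u) (hv : AnalyticAt ℂ v s) (hne : v s ≠ 0)
    (hderiv : deriv u =ᶠ[𝓝 s] deriv v) (huv : u =ᶠ[𝓝[≠] s] v) :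
    deriv (deriv u) s = painleveIVRhs Θ Θinf s (v s) (deriv u s) := by
  have hv_ode : deriv (deriv v) =ᶠ[𝓝[≠] s] fun t => painleveIVRhs Θ Θinf t (v t) (deriv v t) := by
    filter_upwards [huv, nhdsWithin_le_nhds hderiv.deriv, nhdsWithin_le_nhds hderiv,
      nhdsWithin_le_nhds (hv.continuousAt.eventually_ne hne)] with t hut hddt hdt hvt
    rw [← hddt, ← hdt, hode t (hut ▸ hvt), hut]
  have hcont : ContinuousAt (fun t => painleveIVRhs Θ Θinf t (v t) (deriv v t)) s := by
    have hv_cont := hv.continuousAt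
    have hv'_cont := hv.deriv.continuousAt
    have h2v : 2 * v s ≠ 0 := mul_ne_zero two_ne_zero hne
    unfold painleveIVRhs
    fun_prop (disch := assumption)
  rw [hderiv.deriv.eq_of_nhds, hderiv.eq_of_nhds]
  exact ((hv.deriv.deriv.continuousAt.eventuallyEq_nhds_iff_eventuallyEq_nhdsNE hcont).1
    hv_ode).eq_of_nhds

lemma SolvesPainleveIV.differentiableAt {u : ℂ → ℂ} {s : ℂ}
    (hode : SolvesPainleveIV 0 (1 / 2) u) (hne : u s + 2 * s ≠ 0)
    (hs : 4 * ‖u s + 2 * s‖ ≤ ‖s‖) (hfreq : ∃ᶠ t in 𝓝[≠] s, 4 * ‖u t + 2 * t‖ ≤ ‖t‖) :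
    DifferentiableAt ℂ u s := by
  by_contra hnd
  have hd0 : deriv u s = 0 := deriv_zero_of_not_differentiableAt hnd
  have hs0 : 0 < ‖s‖ := by linarith [norm_pos_iff.2 hne]
  have hu0 {x : ℂ} (hx : 4 * ‖x + 2 * s‖ ≤ ‖s‖) : x ≠ 0 :=
    norm_pos_iff.1 (hs0.trans_le (norm_le_norm_of_norm_add_two_mul_le hx))
  have hdd : deriv (deriv u) s = painleveIVRhs 0 (1 / 2) s (u s) 0 := by
    rw [hode s (hu0 hs), hd0]
  have hdd0 : deriv (deriv u) s ≠ 0 := by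
    rw [hdd]
    intro h0
    have hbranch : painleveIVRhs 0 (1 / 2) s (-2 * s) 0 = 0 := by
      simp only [painleveIVRhs]
      ring
    refine hne ?_
    rw [injOn_painleveIVRhs s hs (by simp) (h0.trans hbranch.symm)]
    ring
  obtain ⟨v, hv, hderiv, huv⟩ := exists_analyticAt_of_deriv_deriv_ne_zero hdd0
  have hvs : 4 * ‖v s + 2 * s‖ ≤ ‖s‖ := by
    have hcont : ContinuousAt (fun t => ‖t‖ - 4 * ‖v t + 2 * t‖) s := by
      have := hv.continuousAt
      fun_prop
    refine sub_nonneg.1 (isClosed_Ici.mem_of_frequently_of_tendsto (b := 𝓝[≠] s) ?_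
      (hcont.tendsto.mono_left nhdsWithin_le_nhds))
    refine (hfreq.and_eventually huv).mono fun t ⟨ht, hvt⟩ => ?_
    rw [hvt] at ht
    exact sub_nonneg.2 ht
  have hode_v : deriv (deriv u) s = painleveIVRhs 0 (1 / 2) s (v s) 0 := by
    rw [hode.deriv_deriv_eq_of_eventuallyEq_nhdsNE hv (hu0 hvs) hderiv huv, hd0]
  have hvu : v s = u s := injOn_painleveIVRhs s hvs hs (hode_v.symm.trans hdd)
  exact hnd (hv.differentiableAt.congr_of_eventuallyEq
    (eventuallyEq_nhds_of_eventuallyEq_nhdsNE huv hvu.symm))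

lemma SolvesPainleveIV.eventually_analyticAt {ω : ℂ} {u : ℂ → ℂ}
    (hode : SolvesPainleveIV 0 (1 / 2) u) (hω : ω ≠ 0)
    (hne : ∀ᶠ s in rayAtTop ω, u s + 2 * s ≠ 0)
    (hlt : ∀ᶠ s in rayAtTop ω, 4 * ‖u s + 2 * s‖ < ‖s‖) :
    ∀ᶠ s in rayAtTop ω, AnalyticAt ℂ u s := by
  filter_upwards [hne, hlt, eventually_frequently_nhdsNE_rayAtTop hω hlt] with s hs_ne hs hs_freq
  have hcont := (hode.differentiableAt hs_ne hs.le (hs_freq.mono fun t => le_of_lt)).continuousAt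
  have hcont_w : ContinuousAt (fun t => u t + 2 * t) s := by fun_prop
  have hlt_nhds : ∀ᶠ t in 𝓝 s, 4 * ‖u t + 2 * t‖ < ‖t‖ :=
    (hcont_w.norm.const_mul 4).eventually_lt continuous_norm.continuousAt hs
  refine analyticAt_iff_eventually_differentiableAt.2 ?_
  filter_upwards [hcont_w.eventually_ne hs_ne, hlt_nhds, hlt_nhds.eventually_nhds]
    with t ht_ne ht ht_nhds
  exact hode.differentiableAt ht_ne ht.le
    ((ht_nhds.filter_mono nhdsWithin_le_nhds).frequently.mono fun x => le_of_lt)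

section Asymptotics

variable {ω c : ℂ} {u : ℂ → ℂ}

lemma isBigO_add_two_mul (hω : ω ≠ 0) (hω2 : (ω ^ 2).re = 0)
    (hu : (fun s => u s + 2 * s + c * exp (-s ^ 2)) =O[rayAtTop ω] fun s => s ^ (-1 : ℤ)) :
    (fun s => u s + 2 * s) =O[rayAtTop ω] fun s => s ^ (0 : ℤ) := by
  have hu0 := hu.trans (isBigO_zpow_of_le (rayAtTop_le_cobounded hω) (by norm_num : (-1 : ℤ) ≤ 0))
  simpa using hu0.sub ((isBigO_exp_neg_sq_rayAtTop hω2).const_mul_left c)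

lemma eventually_four_mul_norm_add_two_mul_lt (hω : ω ≠ 0)
    (hw : (fun s => u s + 2 * s) =O[rayAtTop ω] fun s => s ^ (0 : ℤ)) :
    ∀ᶠ s in rayAtTop ω, 4 * ‖u s + 2 * s‖ < ‖s‖ := by
  obtain ⟨C, hC⟩ := hw.bound
  filter_upwards [hC, rayAtTop_le_cobounded hω
    (tendsto_norm_cobounded_atTop.eventually_gt_atTop (4 * C))] with s hs hCs
  rw [zpow_zero, norm_one, mul_one] at hs
  linarith

lemma isBigO_exp_sq_mul_add_two_mul_add (hω : ω ≠ 0) (hω2 : (ω ^ 2).re = 0)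
    (hu : (fun s => u s + 2 * s + c * exp (-s ^ 2)) =O[rayAtTop ω] fun s => s ^ (-1 : ℤ)) :
    (fun s => exp (s ^ 2) * (u s + 2 * s) + c) =O[rayAtTop ω] fun s => s ^ (-1 : ℤ) :=
  (isBigO_mul_zpow (k := -1) (rayAtTop_le_cobounded hω) (isBigO_exp_sq_rayAtTop hω2) hu
    le_rfl).congr_left fun s => by linear_combination c * exp_sq_mul_exp_neg_sq s

lemma eventually_add_two_mul_ne_zero (hω : ω ≠ 0) (hω2 : (ω ^ 2).re = 0) (hc : c ≠ 0)
    (hu : (fun s => u s + 2 * s + c * exp (-s ^ 2)) =O[rayAtTop ω] fun s => s ^ (-1 : ℤ)) :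
    ∀ᶠ s in rayAtTop ω, u s + 2 * s ≠ 0 := by
  have hlim := (isBigO_exp_sq_mul_add_two_mul_add hω hω2 hu).trans_tendsto
    (tendsto_zpow_neg_one_rayAtTop hω)
  filter_upwards [hlim.eventually_ne hc.symm] with s hs h0
  simp [h0] at hs

end Asymptotics

/-! ### Solutions asymptotic to `-2 * s` -/

/-- A solution `(u, z)` of the Painlevé IV Hamiltonian system with `Θ = 0`, `Θ_∞ = 1 / 2`, defined
far out on a ray on which `exp (s ^ 2)` has modulus `1`, such that
`u s = -2 * s - c * exp (-s ^ 2) + O(s⁻¹)`. In the names of lemmas `w` stands for `u s + 2 * s` and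
`y` for `z s - 1 / 2`. -/
structure IsRaySolution (ω c : ℂ) (u z : ℂ → ℂ) : Prop where
  dir_ne_zero : ω ≠ 0
  re_dir_sq : (ω ^ 2).re = 0
  hasDerivAt_u : ∀ᶠ s in rayAtTop ω, HasDerivAt u (u s ^ 2 + 2 * s * u s - 4 * z s) s
  hasDerivAt_z : ∀ᶠ s in rayAtTop ω,
    HasDerivAt z (-2 * z s ^ 2 / u s - u s * (z s - 1 / 2)) s
  isBigO_remainder :
    (fun s => u s + 2 * s + c * exp (-s ^ 2)) =O[rayAtTop ω] fun s => s ^ (-1 : ℤ)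

namespace IsRaySolution

variable {ω c : ℂ} {u z : ℂ → ℂ}

lemma isBigO_mul (h : IsRaySolution ω c u z) {f g : ℂ → ℂ} {m n : ℤ} (k : ℤ)
    (hf : f =O[rayAtTop ω] fun s => s ^ m) (hg : g =O[rayAtTop ω] fun s => s ^ n)
    (hmn : m + n ≤ k) : (fun s => f s * g s) =O[rayAtTop ω] fun s => s ^ k :=
  isBigO_mul_zpow (rayAtTop_le_cobounded h.dir_ne_zero) hf hg hmn

lemma isBigO_of_le (h : IsRaySolution ω c u z) {f : ℂ → ℂ} {m n : ℤ}
    (hf : f =O[rayAtTop ω] fun s => s ^ m) (hmn : m ≤ n) : f =O[rayAtTop ω] fun s => s ^ n :=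
  hf.trans (isBigO_zpow_of_le (rayAtTop_le_cobounded h.dir_ne_zero) hmn)

lemma isBigO_const (h : IsRaySolution ω c u z) (a : ℂ) {n : ℤ} (hn : 0 ≤ n) :
    (fun _ => a) =O[rayAtTop ω] fun s => s ^ n :=
  h.isBigO_of_le (by simpa using isBigO_const_const a (one_ne_zero : (1 : ℂ) ≠ 0) _) hn

lemma isBigO_id (h : IsRaySolution ω c u z) {n : ℤ} (hn : 1 ≤ n) :
    (fun s => s) =O[rayAtTop ω] fun s => s ^ n :=
  h.isBigO_of_le (by simpa using isBigO_refl _ _) hn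

lemma isBigO_exp_sq (h : IsRaySolution ω c u z) :
    (fun s => exp (s ^ 2)) =O[rayAtTop ω] fun s => s ^ (0 : ℤ) :=
  isBigO_exp_sq_rayAtTop h.re_dir_sq

lemma isBigO_exp_neg_sq (h : IsRaySolution ω c u z) :
    (fun s => exp (-s ^ 2)) =O[rayAtTop ω] fun s => s ^ (0 : ℤ) :=
  isBigO_exp_neg_sq_rayAtTop h.re_dir_sq

lemma isBigO_w (h : IsRaySolution ω c u z) :
    (fun s => u s + 2 * s) =O[rayAtTop ω] fun s => s ^ (0 : ℤ) :=
  isBigO_add_two_mul h.dir_ne_zero h.re_dir_sq h.isBigO_remainder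

lemma isBigO_u (h : IsRaySolution ω c u z) : u =O[rayAtTop ω] fun s => s ^ (1 : ℤ) := by
  simpa using (h.isBigO_of_le h.isBigO_w zero_le_one).sub ((h.isBigO_id le_rfl).const_mul_left 2)

lemma eventually_ne_zero (h : IsRaySolution ω c u z) : ∀ᶠ s in rayAtTop ω, s ≠ 0 :=
  rayAtTop_le_cobounded h.dir_ne_zero (Bornology.eventually_ne_cobounded 0)

lemma eventually_norm_le_norm_u (h : IsRaySolution ω c u z) : ∀ᶠ s in rayAtTop ω, ‖s‖ ≤ ‖u s‖ :=
  (eventually_four_mul_norm_add_two_mul_lt h.dir_ne_zero h.isBigO_w).mono fun _ hs =>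
    norm_le_norm_of_norm_add_two_mul_le hs.le

lemma eventually_u_ne_zero (h : IsRaySolution ω c u z) : ∀ᶠ s in rayAtTop ω, u s ≠ 0 := by
  filter_upwards [h.eventually_norm_le_norm_u, h.eventually_ne_zero] with s hle hs
  exact norm_pos_iff.1 ((norm_pos_iff.2 hs).trans_le hle)

lemma isBigO_u_inv (h : IsRaySolution ω c u z) :
    (fun s => (u s)⁻¹) =O[rayAtTop ω] fun s => s ^ (-1 : ℤ) := by
  simp only [zpow_neg_one]
  refine IsBigO.inv_rev (.of_bound 1 ?_) (h.eventually_ne_zero.mono fun s hs h0 => absurd h0 hs)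
  simpa using h.eventually_norm_le_norm_u

lemma hasDerivAt_hamiltonian (h : IsRaySolution ω c u z) : ∀ᶠ s in rayAtTop ω,
    HasDerivAt (fun s => painleveHamiltonian 0 (1 / 2) s (u s) (z s)) (1 / 2 - z s) s := by
  filter_upwards [h.hasDerivAt_u, h.hasDerivAt_z, h.eventually_u_ne_zero] with s hu hz hne
  refine (((hz.div hu hne).mul (hz.sub_const _)).sub (((hu.div_const 2).add (hasDerivAt_id s)).mul
    ((hz.sub_const _).sub_const _))).congr_deriv ?_
  simp only [Pi.add_apply, Pi.div_apply, id]
  field_simp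
  ring

lemma isBigO_zpow_one_hamiltonian (h : IsRaySolution ω c u z) :
    (fun s => painleveHamiltonian 0 (1 / 2) s (u s) (z s)) =O[rayAtTop ω]
      fun s => s ^ (1 : ℤ) := by
  set H := fun s => painleveHamiltonian 0 (1 / 2) s (u s) (z s)
  have hderiv : ∀ᶠ s in rayAtTop ω, HasDerivAt (fun s => 4 * H s - (u s + 2 * s + c * exp (-s ^ 2)))
      (2 * (s * (u s + 2 * s + c * exp (-s ^ 2))) - (u s + 2 * s) * (u s + 2 * s)) s := by
    filter_upwards [h.hasDerivAt_hamiltonian, h.hasDerivAt_u] with s hH hu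
    refine ((hH.const_mul 4).sub ((hu.add ((hasDerivAt_id s).const_mul 2)).add
      (((hasDerivAt_id s).pow 2).neg.cexp.const_mul c))).congr_deriv ?_
    simp only [Pi.pow_apply, Pi.neg_apply, id]
    ring
  have hprimitive := isBigO_rayAtTop_zpow_of_hasDerivAt_of_pos h.dir_ne_zero one_pos hderiv
    (((h.isBigO_mul 0 (h.isBigO_id le_rfl) h.isBigO_remainder (by norm_num)).const_mul_left 2).sub
      (h.isBigO_mul 0 h.isBigO_w h.isBigO_w (by norm_num)))
  refine ((hprimitive.add (h.isBigO_of_le h.isBigO_remainder (by norm_num))).const_mul_left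
    (1 / 4)).congr_left fun s => ?_
  ring

lemma isBigO_zpow_one_z (h : IsRaySolution ω c u z) : z =O[rayAtTop ω] fun s => s ^ (1 : ℤ) := by
  have huw := h.isBigO_mul 1 h.isBigO_u h.isBigO_w (by norm_num)
  refine isBigO_of_sq_eq_add_mul
    (a := fun s => u s * painleveHamiltonian 0 (1 / 2) s (u s) (z s) - u s * (u s + 2 * s) / 4)
    (b := fun s => u s * (u s + 2 * s) / 2) ?_ ?_ ?_
  · filter_upwards [h.eventually_u_ne_zero] with s hne
    rw [painleveHamiltonian]
    field_simp
    ring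
  · have huH := h.isBigO_mul 2 h.isBigO_u h.isBigO_zpow_one_hamiltonian (by norm_num)
    simpa [div_eq_inv_mul] using
      huH.sub ((h.isBigO_of_le huw one_le_two).const_mul_left (4⁻¹ : ℂ))
  · simpa only [div_eq_inv_mul] using huw.const_mul_left (2⁻¹ : ℂ)

lemma hasDerivAt_exp_sq_mul_w (h : IsRaySolution ω c u z) : ∀ᶠ s in rayAtTop ω,
    HasDerivAt (fun s => exp (s ^ 2) * (u s + 2 * s) + c)
      (exp (s ^ 2) * ((u s + 2 * s) ^ 2 - 4 * (z s - 1 / 2))) s := by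
  filter_upwards [h.hasDerivAt_u] with s hu
  refine ((((hasDerivAt_id s).pow 2).cexp.mul (hu.add ((hasDerivAt_id s).const_mul 2))).add_const
    c).congr_deriv ?_
  simp only [Pi.pow_apply, Pi.add_apply, id]
  ring

lemma hasDerivAt_exp_sq_mul_w_sq_sub_y (h : IsRaySolution ω c u z) : ∀ᶠ s in rayAtTop ω,
    HasDerivAt (fun s => exp (s ^ 2) * ((u s + 2 * s) ^ 2 - 4 * (z s - 1 / 2)))
      (exp (s ^ 2) * ((2 * s + 2 * u s) * (u s + 2 * s) ^ 2
        + (4 * u s - 8 * s - 8 * (u s + 2 * s)) * (z s - 1 / 2)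
        + 8 * (z s * (u s)⁻¹) * z s)) s := by
  filter_upwards [h.hasDerivAt_u, h.hasDerivAt_z] with s hu hz
  refine (((hasDerivAt_id s).pow 2).cexp.mul (((hu.add ((hasDerivAt_id s).const_mul 2)).pow 2).sub
    ((hz.sub_const (1 / 2)).const_mul 4))).congr_deriv ?_
  simp only [Pi.pow_apply, Pi.add_apply, Pi.sub_apply, id]
  ring

lemma isBigO_deriv_exp_sq_mul_w_sq_sub_y (h : IsRaySolution ω c u z) :
    (fun s => exp (s ^ 2) * ((2 * s + 2 * u s) * (u s + 2 * s) ^ 2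
        + (4 * u s - 8 * s - 8 * (u s + 2 * s)) * (z s - 1 / 2) + 8 * (z s * (u s)⁻¹) * z s))
      =O[rayAtTop ω] fun s => ‖s‖ * (1 + ‖z s - 1 / 2‖) := by
  have hs := h.isBigO_id le_rfl
  have hw := h.isBigO_of_le h.isBigO_w zero_le_one
  have hw2 := h.isBigO_mul 0 h.isBigO_w h.isBigO_w le_rfl
  have hone : (fun s : ℂ => s ^ (0 : ℤ)) =O[rayAtTop ω] fun s => 1 + ‖z s - 1 / 2‖ :=
    .of_norm_le fun s => by simp
  have hy : (fun s => z s - 1 / 2) =O[rayAtTop ω] fun s => 1 + ‖z s - 1 / 2‖ :=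
    .of_norm_le fun s => by simp
  have hz : z =O[rayAtTop ω] fun s => 1 + ‖z s - 1 / 2‖ :=
    (hy.add ((h.isBigO_const (1 / 2) le_rfl).trans hone)).congr_left fun s => by ring
  have hsum := (((((hs.const_mul_left 2).add (h.isBigO_u.const_mul_left 2)).norm_right.mul
    (hw2.trans hone)).add ((((h.isBigO_u.const_mul_left 4).sub (hs.const_mul_left 8)).sub
      (hw.const_mul_left 8)).norm_right.mul hy)).add
    (((h.isBigO_mul 1 h.isBigO_zpow_one_z h.isBigO_u_inv (by norm_num)).const_mul_left
      8).norm_right.mul hz))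
  refine (h.isBigO_exp_sq.norm_right.mul hsum).congr (fun s => ?_) fun s => ?_
  · ring
  · simp

/- `exp (s ^ 2) * w + c` is `O(s⁻¹)`, its derivative is `g = exp (s ^ 2) * (w ^ 2 - 4 * y)`, and its
second derivative is at most of size `s * (1 + |y|)`, hence at most of size `s * (1 + |g|)`. -/
lemma isBigO_zpow_zero_y (h : IsRaySolution ω c u z) :
    (fun s => z s - 1 / 2) =O[rayAtTop ω] fun s => s ^ (0 : ℤ) := by
  set g := fun s => exp (s ^ 2) * ((u s + 2 * s) ^ 2 - 4 * (z s - 1 / 2))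
  have hf : (fun s => exp (s ^ 2) * (u s + 2 * s) + c) =O[rayAtTop ω] fun s => (s ^ 1)⁻¹ :=
    (isBigO_exp_sq_mul_add_two_mul_add h.dir_ne_zero h.re_dir_sq h.isBigO_remainder).congr_right
      fun s => by simp
  have hw2 := h.isBigO_mul 0 h.isBigO_w h.isBigO_w le_rfl
  have hy_eq (s : ℂ) : 1 / 4 * ((u s + 2 * s) * (u s + 2 * s) - exp (-s ^ 2) * g s)
      = z s - 1 / 2 := by
    linear_combination
      -(1 / 4) * ((u s + 2 * s) ^ 2 - 4 * (z s - 1 / 2)) * exp_sq_mul_exp_neg_sq s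
  have hone : (fun s : ℂ => s ^ (0 : ℤ)) =O[rayAtTop ω] fun s => 1 + ‖g s‖ :=
    .of_norm_le fun s => by simp
  have hg_le : g =O[rayAtTop ω] fun s => 1 + ‖g s‖ := .of_norm_le fun s => by simp
  have hy : (fun s => z s - 1 / 2) =O[rayAtTop ω] fun s => 1 + ‖g s‖ := by
    refine (((hw2.trans hone).sub ((h.isBigO_exp_neg_sq.norm_right.mul hg_le).congr_right
      fun s => ?_)).const_mul_left (1 / 4)).congr_left hy_eq
    simp
  have hy_one : (fun s => 1 + ‖z s - 1 / 2‖) =O[rayAtTop ω] fun s => 1 + ‖g s‖ :=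
    (hone.norm_left.add hy.norm_left).congr_left fun s => by simp
  have hg_one := isBigO_rayAtTop_one_of_isBigO_inv_pow_of_hasDerivAt h.dir_ne_zero
    h.hasDerivAt_exp_sq_mul_w h.hasDerivAt_exp_sq_mul_w_sq_sub_y hf
    (h.isBigO_deriv_exp_sq_mul_w_sq_sub_y.trans
      (((isBigO_refl _ _).mul hy_one).congr_right fun s => by rw [pow_one]))
  have hg_zpow : g =O[rayAtTop ω] fun s => s ^ (0 : ℤ) := hg_one.congr_right fun s => by simp
  exact ((hw2.sub (h.isBigO_mul 0 h.isBigO_exp_neg_sq hg_zpow le_rfl)).const_mul_left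
    (1 / 4)).congr_left hy_eq

lemma isBigO_zpow_zero_z (h : IsRaySolution ω c u z) : z =O[rayAtTop ω] fun s => s ^ (0 : ℤ) := by
  simpa using h.isBigO_zpow_zero_y.add (h.isBigO_const (1 / 2) le_rfl)

/- The summand `(12 * y ^ 2 - 1) / (4 * s)` cancels the terms of order `s ^ (-2)` in the
derivative. -/
lemma hasDerivAt_exp_neg_sq_mul_u_mul_y_add (h : IsRaySolution ω c u z) : ∀ᶠ s in rayAtTop ω,
    HasDerivAt (fun s => exp (-s ^ 2) * (s ^ (-2 : ℤ) *
        (u s * (z s - 1 / 2) + (12 * (z s - 1 / 2) ^ 2 - 1) / (4 * s))))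
      (exp (-s ^ 2) * (s ^ (-3 : ℤ) * (3 / 4 * s ^ (-1 : ℤ) - 9 * s ^ (-1 : ℤ) * (z s - 1 / 2) ^ 2
        - (z s - 1 / 2) * (12 * z s ^ 2 * (u s)⁻¹
          + 6 * (u s + 2 * s) * (z s - 1 / 2) + 2 * (u s + 2 * s))))) s := by
  filter_upwards [h.hasDerivAt_u, h.hasDerivAt_z, h.eventually_u_ne_zero, h.eventually_ne_zero]
    with s hu hz hne hs
  have hy := hz.sub_const (1 / 2)
  refine (((hasDerivAt_id s).pow 2).neg.cexp.mul ((hasDerivAt_zpow (-2) s (.inl hs)).mul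
    ((hu.mul hy).add ((((hy.pow 2).const_mul 12).sub_const 1).div ((hasDerivAt_id s).const_mul 4)
      (by simpa using hs))))).congr_deriv ?_
  simp only [Pi.pow_apply, Pi.add_apply, Pi.neg_apply, Pi.mul_apply, Pi.div_apply, id, zpow_neg,
    zpow_ofNat, Int.reduceNeg, Int.reduceSub, Int.cast_neg, Int.cast_ofNat]
  field_simp
  ring

lemma isBigO_deriv_exp_neg_sq_mul_u_mul_y_add (h : IsRaySolution ω c u z) :
    (fun s => exp (-s ^ 2) * (s ^ (-3 : ℤ) * (3 / 4 * s ^ (-1 : ℤ)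
        - 9 * s ^ (-1 : ℤ) * (z s - 1 / 2) ^ 2 - (z s - 1 / 2) * (12 * z s ^ 2 * (u s)⁻¹
          + 6 * (u s + 2 * s) * (z s - 1 / 2) + 2 * (u s + 2 * s))))) =O[rayAtTop ω]
      fun s => s ^ (-3 : ℤ) := by
  have hz := h.isBigO_zpow_zero_z
  have hy := h.isBigO_zpow_zero_y
  have hsinv : (fun s : ℂ => s ^ (-1 : ℤ)) =O[rayAtTop ω] fun s => s ^ (0 : ℤ) :=
    h.isBigO_of_le (isBigO_refl _ _) (by norm_num)
  have hy2 := h.isBigO_mul 0 (hsinv.const_mul_left 9) (h.isBigO_mul 0 hy hy le_rfl) le_rfl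
  have hz2 := h.isBigO_mul 0 ((h.isBigO_mul 0 hz hz le_rfl).const_mul_left 12) h.isBigO_u_inv
    (by norm_num)
  have hwy := h.isBigO_mul 0 (h.isBigO_w.const_mul_left 6) hy le_rfl
  refine (h.isBigO_mul (-3) h.isBigO_exp_neg_sq (h.isBigO_mul (-3)
    (isBigO_refl (fun s : ℂ => s ^ (-3 : ℤ)) _)
    (((hsinv.const_mul_left (3 / 4)).sub hy2).sub (h.isBigO_mul 0 hy ((hz2.add hwy).add
      (h.isBigO_w.const_mul_left 2)) le_rfl)) le_rfl) le_rfl).congr_left fun s => ?_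
  ring

/- The linear part of the equation of `u * y` has the solution `s ^ 2 * exp (s ^ 2)`, of modulus
`‖s‖ ^ 2`, which the bound `O(s)` rules out. -/
lemma isBigO_u_mul_y (h : IsRaySolution ω c u z) :
    (fun s => u s * (z s - 1 / 2)) =O[rayAtTop ω] fun s => s ^ (0 : ℤ) := by
  have hy := h.isBigO_zpow_zero_y
  have hy2 := h.isBigO_mul 0 hy hy le_rfl
  have hsinv : (fun s : ℂ => s ^ (-1 : ℤ)) =O[rayAtTop ω] fun s => s ^ (-1 : ℤ) := isBigO_refl _ _
  set X := fun s => u s * (z s - 1 / 2) + (12 * (z s - 1 / 2) ^ 2 - 1) / (4 * s)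
  have hcorr : (fun s => (12 * (z s - 1 / 2) ^ 2 - 1) / (4 * s)) =O[rayAtTop ω]
      fun s => s ^ (-1 : ℤ) := by
    refine ((h.isBigO_mul (-1) ((hy2.const_mul_left 12).sub (h.isBigO_const 1 le_rfl)) hsinv
      le_rfl).const_mul_left (1 / 4)).congr_left fun s => ?_
    rw [zpow_neg_one]
    ring
  have hX_one : X =O[rayAtTop ω] fun s => s ^ (1 : ℤ) :=
    (h.isBigO_mul 1 h.isBigO_u hy le_rfl).add (h.isBigO_of_le hcorr (by norm_num))
  have hF_neg_one := h.isBigO_mul (-1) h.isBigO_exp_neg_sq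
    (h.isBigO_mul (-1) (isBigO_refl (fun s : ℂ => s ^ (-2 : ℤ)) _) hX_one le_rfl) le_rfl
  have hF_neg_two := isBigO_rayAtTop_zpow_of_hasDerivAt_of_neg (n := -2) h.dir_ne_zero
    (by norm_num) h.hasDerivAt_exp_neg_sq_mul_u_mul_y_add
    (by simpa only [Int.reduceNeg, Int.reduceSub] using h.isBigO_deriv_exp_neg_sq_mul_u_mul_y_add)
    (hF_neg_one.trans_tendsto (tendsto_zpow_neg_one_rayAtTop h.dir_ne_zero))
  have hX : X =O[rayAtTop ω] fun s => s ^ (0 : ℤ) := by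
    refine (h.isBigO_mul 0 (isBigO_refl (fun s : ℂ => s ^ (2 : ℤ)) _)
      (h.isBigO_mul (-2) h.isBigO_exp_sq hF_neg_two le_rfl) le_rfl).congr' ?_ .rfl
    filter_upwards [h.eventually_ne_zero] with s hs
    rw [← mul_assoc (exp _), exp_sq_mul_exp_neg_sq, one_mul, ← mul_assoc, ← zpow_add₀ hs,
      add_neg_cancel, zpow_zero, one_mul]
  exact (hX.sub (h.isBigO_of_le hcorr (by norm_num))).congr_left fun s => by ring

lemma isBigO_y (h : IsRaySolution ω c u z) :
    (fun s => z s - 1 / 2) =O[rayAtTop ω] fun s => s ^ (-1 : ℤ) := by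
  refine (h.isBigO_mul (-1) h.isBigO_u_mul_y h.isBigO_u_inv le_rfl).congr' ?_ .rfl
  filter_upwards [h.eventually_u_ne_zero] with s hne
  field_simp

lemma isBigO_hamiltonian (h : IsRaySolution ω c u z) :
    (fun s => painleveHamiltonian 0 (1 / 2) s (u s) (z s)) =O[rayAtTop ω]
      fun s => s ^ (-1 : ℤ) := by
  have hz := h.isBigO_zpow_zero_z
  refine ((h.isBigO_mul (-1) (h.isBigO_mul 0 hz hz le_rfl) h.isBigO_u_inv le_rfl).sub
    ((h.isBigO_mul (-1) h.isBigO_w h.isBigO_y le_rfl).const_mul_left (1 / 2))).congr_left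
    fun s => ?_
  rw [painleveHamiltonian]
  ring

end IsRaySolution

lemma SolvesPainleveIV.isRaySolution {ω c : ℂ} {u : ℂ → ℂ} (hode : SolvesPainleveIV 0 (1 / 2) u)
    (hω : ω ≠ 0) (hω2 : (ω ^ 2).re = 0) (hc : c ≠ 0)
    (hu : (fun s => u s + 2 * s + c * exp (-s ^ 2)) =O[rayAtTop ω] fun s => s ^ (-1 : ℤ)) :
    IsRaySolution ω c u fun s => painleveZ 0 s (u s) (deriv u s) := by
  have hlt := eventually_four_mul_norm_add_two_mul_lt hω (isBigO_add_two_mul hω hω2 hu)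
  have hanalytic := hode.eventually_analyticAt hω (eventually_add_two_mul_ne_zero hω hω2 hc hu) hlt
  refine ⟨hω, hω2, ?_, ?_, hu⟩
  · filter_upwards [hanalytic] with s hs
    refine hs.differentiableAt.hasDerivAt.congr_deriv ?_
    rw [painleveZ]
    ring
  · filter_upwards [hanalytic, hlt, rayAtTop_le_cobounded hω
      (Bornology.eventually_ne_cobounded 0)] with s hs hs_lt hs0
    have hus : u s ≠ 0 := norm_pos_iff.1
      ((norm_pos_iff.2 hs0).trans_le (norm_le_norm_of_norm_add_two_mul_le hs_lt.le))
    exact (hode.hasDerivAt_painleveZ hs hus).congr_deriv (by ring)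

lemma rayDir_sq : rayDir ^ 2 = -I := by
  rw [rayDir, ← exp_nat_mul, show ((2 : ℕ) : ℂ) * (-(Real.pi : ℂ) * I / 4)
    = -((Real.pi : ℂ) / 2 * I) by push_cast; ring, exp_neg, exp_pi_div_two_mul_I, inv_I]

theorem stmt_9_general {u : ℂ → ℂ} {ω c : ℂ} (hω : ω ≠ 0) (hω2 : (ω ^ 2).re = 0) (hc : c ≠ 0)
    (hode : SolvesPainleveIV 0 (1 / 2) u)
    (hu : (fun r : ℝ => u (r * ω) + 2 * (r * ω) + c * exp (-(r * ω) ^ 2)) =O[atTop]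
      fun r : ℝ => r⁻¹) :
    (fun r : ℝ => painleveHamiltonian 0 (1 / 2) (r * ω) (u (r * ω))
      (painleveZ 0 (r * ω) (u (r * ω)) (deriv u (r * ω)))) =O[atTop] fun r : ℝ => r⁻¹ := by
  simp only [← zpow_neg_one] at hu ⊢
  have hsol := hode.isRaySolution hω hω2 hc ((isBigO_rayAtTop_zpow hω).2 hu)
  exact (isBigO_rayAtTop_zpow hω).1 hsol.isBigO_hamiltonian

/-- Let `u` solve Painlevé IV with `Θ = 0`, `Θ_∞ = 1/2`, let
`z = (1/4)(-u' + u² + 2su)` and `H = z²/u - (u/2 + s)(z - 1/2)`.  If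
`u(s) = -2s - (2i/√π)e^{-s²} + O(s⁻¹)` along the ray `arg s = -π/4`, then
`H(s) = O(s⁻¹)` along the same ray. -/
theorem stmt_9 (u : ℂ → ℂ)
    (hode : ∀ s : ℂ, u s ≠ 0 →
      deriv (deriv u) s = (deriv u s) ^ 2 / (2 * u s) + (3 / 2 : ℂ) * (u s) ^ 3
        + 4 * s * (u s) ^ 2 + 2 * (s ^ 2 + 1 - 2 * (1 / 2 : ℂ)) * u s
        - 8 * (0 : ℂ) ^ 2 / u s)
    (hu : (fun r : ℝ => u ((r : ℂ) * rayDir) + 2 * ((r : ℂ) * rayDir)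
        + (2 * I / (Real.sqrt Real.pi : ℂ)) * Complex.exp (-((r : ℂ) * rayDir) ^ 2))
      =O[atTop] fun r : ℝ => r⁻¹) :
    (fun r : ℝ =>
      ((1 / 4 : ℂ) * (-(deriv u ((r : ℂ) * rayDir)) + (u ((r : ℂ) * rayDir)) ^ 2
          + 2 * ((r : ℂ) * rayDir) * u ((r : ℂ) * rayDir))) ^ 2 / u ((r : ℂ) * rayDir)
        - (u ((r : ℂ) * rayDir) / 2 + (r : ℂ) * rayDir) *
          ((1 / 4 : ℂ) * (-(deriv u ((r : ℂ) * rayDir)) + (u ((r : ℂ) * rayDir)) ^ 2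
              + 2 * ((r : ℂ) * rayDir) * u ((r : ℂ) * rayDir)) - 1 / 2))
      =O[atTop] fun r : ℝ => r⁻¹ := by
  have hω : rayDir ≠ 0 := exp_ne_zero _
  refine (stmt_9_general hω (by simp [rayDir_sq])
    (by simp [Real.sqrt_ne_zero', Real.pi_pos]) hode hu).congr_left fun r => ?_
  simp only [painleveHamiltonian, painleveZ]
  ring
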